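/- arXiv:2103.07498 — 3 statements merged into one kernel-verified Lean document; each statement's English description precedes it below -/
import Mathlib

section
/- For all integers n ≥ 2 and k ≥ 0, the number of Fibonacci permutations of {1,…,n} having exactly k descents equals the binomial coefficient C(n−k, k) (interpreted as 0 when k > n−k). -/
open Finset

/-- The number of descents of a permutation of `Fin n`:
positions `i` with `i+1 < n` and `π(i) > π(i+1)`. -/
def descents {n : ℕ} (π : Equiv.Perm (Fin n)) : ℕ :=
  (Finset.univ.filter fun i : Fin n =>
    ∃ h : (i : ℕ) + 1 < n, π ⟨(i : ℕ) + 1, h⟩ < π i).card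

/-- Fibonacci permutations: permutations with `|π(i) - i| ≤ 1` for all `i`. -/
def fibPerms (n : ℕ) : Finset (Equiv.Perm (Fin n)) :=
  Finset.univ.filter fun π => ∀ i : Fin n, |(π i : ℤ) - (i : ℤ)| ≤ 1

/-!
A Fibonacci permutation is an involution exchanging disjoint pairs `i, i + 1`, and its descents are
exactly the left ends of these pairs. Hence it is determined by its descent set, and the sets that
occur are those without two consecutive elements. Splitting such subsets of `{0, …, n}` according
to whether they contain `n` gives the recursion satisfied by `C(n - k, k)` by Pascal's rule.
-/

section SparseSubsets

variable {n k : ℕ} {S : Finset ℕ}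

/-- The `k`-element sets without two consecutive elements that can occur as descent sets of
permutations of `Fin n`. The positions run from `0` to `n - 2`, so `i + 1 < n`. -/
def sparseSubsets (n k : ℕ) : Finset (Finset ℕ) :=
  {S ∈ powersetCard k (range (n - 1)) | ∀ i ∈ S, i + 1 ∉ S}

lemma mem_sparseSubsets :
    S ∈ sparseSubsets n k ↔ (∀ i ∈ S, i + 1 < n) ∧ #S = k ∧ ∀ i ∈ S, i + 1 ∉ S := by
  simp only [sparseSubsets, mem_filter, mem_powersetCard, subset_iff, mem_range,
    Nat.lt_sub_iff_add_lt, and_assoc]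

lemma notMem_of_mem_sparseSubsets {m : ℕ} (hS : S ∈ sparseSubsets n k) (hm : n ≤ m + 1) :
    m ∉ S :=
  fun hmS => ((mem_sparseSubsets.1 hS).1 m hmS).not_ge hm

lemma sparseSubsets_zero_right (n : ℕ) : sparseSubsets n 0 = {∅} := by
  simp [sparseSubsets, filter_singleton]

lemma sparseSubsets_succ_eq_empty (hn : n ≤ 1) (k : ℕ) : sparseSubsets n (k + 1) = ∅ := by
  simp [sparseSubsets, Nat.sub_eq_zero_of_le hn]

lemma insert_mem_sparseSubsets (hS : S ∈ sparseSubsets n k) :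
    insert n S ∈ sparseSubsets (n + 2) (k + 1) := by
  have hnS : n ∉ S := notMem_of_mem_sparseSubsets hS n.le_succ
  obtain ⟨hlt, hcard, hsparse⟩ := mem_sparseSubsets.1 hS
  exact mem_sparseSubsets.2 ⟨by grind, by rw [card_insert_of_notMem hnS, hcard], by grind⟩

lemma erase_mem_sparseSubsets (hS : S ∈ sparseSubsets (n + 2) (k + 1)) (hnS : n ∈ S) :
    S.erase n ∈ sparseSubsets n k := by
  obtain ⟨hlt, hcard, hsparse⟩ := mem_sparseSubsets.1 hS
  have hcard_erase : #(S.erase n) = k := by rw [card_erase_of_mem hnS, hcard, Nat.add_sub_cancel]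
  exact mem_sparseSubsets.2 ⟨by grind, hcard_erase, by grind⟩

lemma sparseSubsets_add_two (n k : ℕ) :
    sparseSubsets (n + 2) (k + 1) =
      sparseSubsets (n + 1) (k + 1) ∪ (sparseSubsets n k).image (insert n) := by
  ext S
  rw [mem_union, mem_image]
  constructor
  · intro hS
    by_cases hnS : n ∈ S
    · exact .inr ⟨S.erase n, erase_mem_sparseSubsets hS hnS, insert_erase hnS⟩
    · left
      rw [mem_sparseSubsets] at hS ⊢
      grind
  · rintro (hS | ⟨T, hT, rfl⟩)
    · rw [mem_sparseSubsets] at hS ⊢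
      grind
    · exact insert_mem_sparseSubsets hT

lemma card_sparseSubsets_add_two (n k : ℕ) :
    #(sparseSubsets (n + 2) (k + 1)) = #(sparseSubsets (n + 1) (k + 1)) + #(sparseSubsets n k) := by
  have hdisj : Disjoint (sparseSubsets (n + 1) (k + 1)) ((sparseSubsets n k).image (insert n)) := by
    refine disjoint_left.2 fun S hS hS' => ?_
    obtain ⟨T, -, rfl⟩ := mem_image.1 hS'
    exact notMem_of_mem_sparseSubsets hS le_rfl (mem_insert_self n T)
  have hinj : Set.InjOn (insert n) (sparseSubsets n k : Set (Finset ℕ)) :=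
    (insert_erase_invOn (a := n)).2.injOn.mono fun _ hS =>
      notMem_of_mem_sparseSubsets hS n.le_succ
  rw [sparseSubsets_add_two, card_union_of_disjoint hdisj, card_image_of_injOn hinj]

lemma choose_sub_add_two (n k : ℕ) :
    (n + 2 - (k + 1)).choose (k + 1) = (n + 1 - (k + 1)).choose (k + 1) + (n - k).choose k := by
  obtain hkn | hnk := le_or_gt k n
  · rw [show n + 2 - (k + 1) = n - k + 1 by omega, Nat.add_sub_add_right, Nat.choose_succ_succ,
      add_comm]
  · simp only [Nat.choose_eq_zero_of_lt, show n + 2 - (k + 1) < k + 1 by omega,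
      show n + 1 - (k + 1) < k + 1 by omega, show n - k < k by omega]

theorem card_sparseSubsets (n k : ℕ) : #(sparseSubsets n k) = (n - k).choose k := by
  induction n using Nat.twoStepInduction generalizing k with
  | zero => cases k <;> simp [sparseSubsets_zero_right, sparseSubsets_succ_eq_empty]
  | one => cases k <;> simp [sparseSubsets_zero_right, sparseSubsets_succ_eq_empty]
  | more n ih_n ih_succ =>
    cases k with
    | zero => simp [sparseSubsets_zero_right]
    | succ k => rw [card_sparseSubsets_add_two, ih_succ, ih_n, choose_sub_add_two]

end SparseSubsets

section AdjacentSwaps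

variable {S : Finset ℕ}

/-- The map exchanging `i` and `i + 1` for every `i ∈ S`, meaningful when `S` has no two consecutive
elements. -/
def adjacentSwaps (S : Finset ℕ) (i : ℕ) : ℕ :=
  if i ∈ S then i + 1 else if ∃ j ∈ S, j + 1 = i then i - 1 else i

lemma adjacentSwaps_of_mem {i : ℕ} (hi : i ∈ S) : adjacentSwaps S i = i + 1 :=
  if_pos hi

lemma adjacentSwaps_succ_of_mem {i : ℕ} (hi : i ∈ S) (hi' : i + 1 ∉ S) :
    adjacentSwaps S (i + 1) = i := by
  rw [adjacentSwaps, if_neg hi', if_pos ⟨i, hi, rfl⟩, Nat.add_sub_cancel]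

lemma adjacentSwaps_of_notMem {i : ℕ} (hi : i ∉ S) (hpred : ¬∃ j ∈ S, j + 1 = i) :
    adjacentSwaps S i = i := by
  rw [adjacentSwaps, if_neg hi, if_neg hpred]

lemma adjacentSwaps_le (S : Finset ℕ) (i : ℕ) : adjacentSwaps S i ≤ i + 1 := by
  unfold adjacentSwaps
  split_ifs <;> omega

lemma le_adjacentSwaps (S : Finset ℕ) (i : ℕ) : i ≤ adjacentSwaps S i + 1 := by
  unfold adjacentSwaps
  split_ifs <;> omega

lemma adjacentSwaps_eq_succ_iff {i : ℕ} : adjacentSwaps S i = i + 1 ↔ i ∈ S := by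
  refine ⟨fun h => ?_, adjacentSwaps_of_mem⟩
  by_contra hi
  rw [adjacentSwaps, if_neg hi] at h
  split_ifs at h <;> omega

lemma adjacentSwaps_lt {n i : ℕ} (hS : ∀ i ∈ S, i + 1 < n) (hi : i < n) :
    adjacentSwaps S i < n := by
  unfold adjacentSwaps
  split_ifs with hiS
  · exact hS i hiS
  · omega
  · exact hi

lemma adjacentSwaps_involutive (hS : ∀ i ∈ S, i + 1 ∉ S) :
    Function.Involutive (adjacentSwaps S) := by
  intro i
  by_cases hi : i ∈ S
  · rw [adjacentSwaps_of_mem hi, adjacentSwaps_succ_of_mem hi (hS i hi)]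
  by_cases hpred : ∃ j ∈ S, j + 1 = i
  · obtain ⟨j, hj, rfl⟩ := hpred
    rw [adjacentSwaps_succ_of_mem hj hi, adjacentSwaps_of_mem hj]
  · rw [adjacentSwaps_of_notMem hi hpred, adjacentSwaps_of_notMem hi hpred]

end AdjacentSwaps

section FibPerms

variable {n : ℕ} {π : Equiv.Perm (Fin n)}

lemma mem_fibPerms :
    π ∈ fibPerms n ↔ ∀ i : Fin n, (π i : ℕ) ≤ i + 1 ∧ (i : ℕ) ≤ π i + 1 := by
  simp only [fibPerms, mem_filter, mem_univ, true_and, abs_le]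
  exact forall_congr' fun i => by omega

lemma inv_mem_fibPerms (hπ : π ∈ fibPerms n) : π⁻¹ ∈ fibPerms n := by
  rw [mem_fibPerms] at hπ ⊢
  intro i
  simpa [and_comm] using hπ (π⁻¹ i)

lemma apply_eq_of_apply_eq_succ (hπ : π ∈ fibPerms n) {i j : Fin n} (hij : (j : ℕ) = i + 1)
    (hi : π i = j) : π j = i := by
  induction i using WellFoundedLT.induction generalizing j with
  | ind i ih =>
    -- By induction the preimage of `i` cannot be `i - 1`, as then `π i = i - 1`; so it is `i + 1`.
    obtain ⟨x, hx⟩ := π.surjective i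
    have hij_ne : i ≠ j := by omega
    have hxi : x ≠ i := by
      rintro rfl
      exact hij_ne (hx.symm.trans hi)
    obtain hpred | hsucc : (i : ℕ) = x + 1 ∨ x = j := by
      have := mem_fibPerms.1 hπ x
      rw [hx] at this
      omega
    · have hxj : x = j := (ih x (by omega) hpred hx).symm.trans hi
      omega
    · rwa [← hsucc]

lemma fibPerms_involutive (hπ : π ∈ fibPerms n) : Function.Involutive π := by
  intro i
  obtain hup | hfix | hdown : (π i : ℕ) = i + 1 ∨ π i = i ∨ (i : ℕ) = π i + 1 := by
    have := mem_fibPerms.1 hπ i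
    omega
  · exact apply_eq_of_apply_eq_succ hπ hup rfl
  · rw [hfix, hfix]
  · rw [← Equiv.Perm.eq_inv_iff_eq]
    exact (apply_eq_of_apply_eq_succ (inv_mem_fibPerms hπ) hdown (π.symm_apply_apply i)).symm

end FibPerms

section DescentSet

variable {n : ℕ} {π : Equiv.Perm (Fin n)}

/-- The set of descents of `π`, as natural numbers counted from `0`. -/
def descentSet (π : Equiv.Perm (Fin n)) : Finset ℕ :=
  ({i | ∃ h : (i : ℕ) + 1 < n, π ⟨i + 1, h⟩ < π i} : Finset (Fin n)).map Fin.valEmbedding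

lemma card_descentSet (π : Equiv.Perm (Fin n)) : #(descentSet π) = descents π :=
  card_map _

lemma mem_descentSet {i : ℕ} :
    i ∈ descentSet π ↔ ∃ h : i + 1 < n, π ⟨i + 1, h⟩ < π ⟨i, i.lt_succ_self.trans h⟩ := by
  simp only [descentSet, mem_map, mem_filter, mem_univ, true_and, Fin.valEmbedding_apply]
  constructor
  · rintro ⟨j, hj, rfl⟩
    exact hj
  · rintro ⟨h, hlt⟩
    exact ⟨⟨i, i.lt_succ_self.trans h⟩, ⟨h, hlt⟩, rfl⟩

lemma val_mem_descentSet_iff (hπ : π ∈ fibPerms n) (i : Fin n) :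
    (i : ℕ) ∈ descentSet π ↔ (π i : ℕ) = i + 1 := by
  rw [mem_descentSet]
  constructor
  · rintro ⟨h, hlt⟩
    have hi := mem_fibPerms.1 hπ i
    have hsucc := mem_fibPerms.1 hπ ⟨i + 1, h⟩
    simp only [Fin.eta, Fin.lt_def] at hlt hsucc
    omega
  · intro hup
    have h : (i : ℕ) + 1 < n := hup ▸ (π i).isLt
    have hi : π i = ⟨i + 1, h⟩ := Fin.ext hup
    refine ⟨h, ?_⟩
    rw [apply_eq_of_apply_eq_succ hπ rfl hi, Fin.eta, hi]
    exact Nat.lt_succ_self i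

lemma descentSet_mem_sparseSubsets (hπ : π ∈ fibPerms n) :
    descentSet π ∈ sparseSubsets n (descents π) := by
  refine mem_sparseSubsets.2
    ⟨fun i hi => (mem_descentSet.1 hi).1, card_descentSet π, fun i hi hi' => ?_⟩
  obtain ⟨h, -⟩ := mem_descentSet.1 hi
  have hup : π ⟨i, by omega⟩ = ⟨i + 1, h⟩ :=
    Fin.ext ((val_mem_descentSet_iff hπ ⟨i, by omega⟩).1 hi)
  have hdown : π ⟨i + 1, h⟩ = ⟨i, by omega⟩ := apply_eq_of_apply_eq_succ hπ rfl hup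
  have hup' := (val_mem_descentSet_iff hπ ⟨i + 1, h⟩).1 hi'
  rw [hdown] at hup'
  simp only at hup'
  omega

lemma val_apply_eq_adjacentSwaps (hπ : π ∈ fibPerms n) (i : Fin n) :
    (π i : ℕ) = adjacentSwaps (descentSet π) i := by
  by_cases hi : (i : ℕ) ∈ descentSet π
  · rw [adjacentSwaps_of_mem hi, (val_mem_descentSet_iff hπ i).1 hi]
  by_cases hpred : ∃ j ∈ descentSet π, j + 1 = i
  · obtain ⟨j, hj, hji⟩ := hpred
    have hup : π ⟨j, by omega⟩ = i :=
      Fin.ext (((val_mem_descentSet_iff hπ ⟨j, by omega⟩).1 hj).trans hji)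
    rw [← hji, adjacentSwaps_succ_of_mem hj (hji ▸ hi), ← hup, fibPerms_involutive hπ]
  · rw [adjacentSwaps_of_notMem hi hpred]
    have hnotUp : (π i : ℕ) ≠ i + 1 := mt (val_mem_descentSet_iff hπ i).2 hi
    have hnotDown : (π i : ℕ) + 1 ≠ i := by
      intro hdown
      have hmem := (val_mem_descentSet_iff hπ (π i)).2 (by rw [fibPerms_involutive hπ, hdown])
      exact hpred ⟨π i, hmem, hdown⟩
    have := mem_fibPerms.1 hπ i
    omega

theorem descentSet_injOn_fibPerms :
    Set.InjOn descentSet (fibPerms n : Set (Equiv.Perm (Fin n))) := by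
  intro π hπ ρ hρ h
  ext i
  rw [val_apply_eq_adjacentSwaps hπ, val_apply_eq_adjacentSwaps hρ, h]

theorem exists_mem_fibPerms_descentSet_eq {S : Finset ℕ} (hlt : ∀ i ∈ S, i + 1 < n)
    (hsparse : ∀ i ∈ S, i + 1 ∉ S) : ∃ π ∈ fibPerms n, descentSet π = S := by
  let f (i : Fin n) : Fin n := ⟨adjacentSwaps S i, adjacentSwaps_lt hlt i.isLt⟩
  have hf : Function.Involutive f := fun i => Fin.ext (adjacentSwaps_involutive hsparse i)
  have hfib : hf.toPerm f ∈ fibPerms n :=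
    mem_fibPerms.2 fun i => ⟨adjacentSwaps_le S i, le_adjacentSwaps S i⟩
  have hmem (i : Fin n) : (i : ℕ) ∈ descentSet (hf.toPerm f) ↔ (i : ℕ) ∈ S :=
    (val_mem_descentSet_iff hfib i).trans adjacentSwaps_eq_succ_iff
  refine ⟨hf.toPerm f, hfib, Finset.ext fun i => ⟨fun hi => ?_, fun hi => ?_⟩⟩
  · have hin : i + 1 < n := (mem_descentSet.1 hi).1
    exact (hmem ⟨i, by omega⟩).1 hi
  · have hin : i + 1 < n := hlt i hi
    exact (hmem ⟨i, by omega⟩).2 hi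

end DescentSet

/-- The number of Fibonacci permutations of `{1,…,n}` with exactly `k` descents is
`C(n-k, k)`. -/
theorem fibPerms_descents_card (n k : ℕ) (hn : 2 ≤ n) :
    ((fibPerms n).filter fun π => descents π = k).card = Nat.choose (n - k) k := by
  rw [← card_sparseSubsets]
  refine card_nbij descentSet ?mapsTo ?injOn ?surjOn
  case mapsTo =>
    intro π hπ
    obtain ⟨hfib, rfl⟩ := mem_filter.1 hπ
    exact descentSet_mem_sparseSubsets hfib
  case injOn => exact descentSet_injOn_fibPerms.mono (filter_subset _ _)
  case surjOn =>
    intro S hS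
    obtain ⟨hlt, hcard, hsparse⟩ := mem_sparseSubsets.1 hS
    obtain ⟨π, hfib, rfl⟩ := exists_mem_fibPerms_descentSet_eq hlt hsparse
    exact ⟨π, mem_filter.2 ⟨hfib, (card_descentSet π).symm.trans hcard⟩, rfl⟩
end

section
/- For every integer n ≥ 1, Σ_{(a_1,…,a_m) ∈ C_{≤2}(n)} Π_{i : a_i = 2} (1 + a_1 + ⋯ + a_{i−1})² = n!, where the sum is over all compositions of n with parts in {1,2} and the product is over the indices i whose part a_i equals 2 (an empty product equals 1). -/
open Finset

/-- The compositions of `n` all of whose parts are `1` or `2`. -/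
def compsLe2 (n : ℕ) : Finset (Composition n) :=
  Finset.univ.filter fun c => ∀ a ∈ c.blocks, a = 1 ∨ a = 2

/-!
Removing the last part splits the compositions of `n + 2` into those of `n + 1` (last part `1`,
contributing a factor `1`) and those of `n` (last part `2`, contributing a factor `(n + 1) ^ 2`,
because the preceding parts sum to `n`). Hence the weighted sums satisfy
`S (n + 2) = S (n + 1) + (n + 1) ^ 2 * S n`, a recurrence that the factorials satisfy as well.
-/

section AppendPart

variable {n k : ℕ}

/-- Appending a last part `k` to a composition of `n`, as an embedding so that images of finsets
under it can be summed over. -/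
def appendPart (n k : ℕ) (hk : 0 < k) : Composition n ↪ Composition (n + k) where
  toFun c := c.append (.single k hk)
  inj' _ _ h := Composition.ext (List.append_cancel_right (congrArg Composition.blocks h))

lemma blocks_appendPart (hk : 0 < k) (c : Composition n) :
    (appendPart n k hk c).blocks = c.blocks ++ [k] :=
  rfl

lemma exists_appendPart_eq (hk : 0 < k) {c : Composition (n + k)} {l : List ℕ}
    (hc : c.blocks = l ++ [k]) : ∃ d : Composition n, appendPart n k hk d = c := by
  have l_pos : ∀ {a}, a ∈ l → 0 < a := fun ha => c.blocks_pos (hc ▸ List.mem_append_left _ ha)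
  have l_sum : l.sum = n := by simpa [hc] using c.blocks_sum
  exact ⟨⟨l, l_pos, l_sum⟩, Composition.ext hc.symm⟩

end AppendPart

section CompsLe2

variable {n k : ℕ}

lemma mem_compsLe2 {c : Composition n} : c ∈ compsLe2 n ↔ ∀ a ∈ c.blocks, a = 1 ∨ a = 2 := by
  simp [compsLe2]

lemma appendPart_mem_compsLe2 (hk : 0 < k) {c : Composition n} :
    appendPart n k hk c ∈ compsLe2 (n + k) ↔ c ∈ compsLe2 n ∧ (k = 1 ∨ k = 2) := by
  simp only [mem_compsLe2, blocks_appendPart, List.forall_mem_append, List.forall_mem_singleton]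

lemma compsLe2_eq_singleton_of_le_one (hn : n ≤ 1) : compsLe2 n = {Composition.ones n} := by
  have composition_subsingleton : Subsingleton (Composition n) := by
    rw [← Fintype.card_le_one_iff_subsingleton, composition_card, Nat.sub_eq_zero_of_le hn,
      pow_zero]
  have ones_mem : Composition.ones n ∈ compsLe2 n :=
    mem_compsLe2.2 fun _ ha => .inl (List.eq_of_mem_replicate ha)
  exact eq_singleton_iff_unique_mem.2 ⟨ones_mem, fun _ _ => Subsingleton.elim _ _⟩

lemma compsLe2_add_two (n : ℕ) :
    compsLe2 (n + 2) = (compsLe2 (n + 1)).map (appendPart (n + 1) 1 one_pos) ∪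
      (compsLe2 n).map (appendPart n 2 two_pos) := by
  ext c
  simp only [mem_union, mem_map]
  constructor
  · intro hc
    have blocks_ne_nil : c.blocks ≠ [] := fun h => by simpa [h] using c.blocks_sum
    obtain ⟨l, a, hl⟩ := List.eq_nil_or_concat' c.blocks |>.resolve_left blocks_ne_nil
    obtain rfl | rfl : a = 1 ∨ a = 2 := mem_compsLe2.1 hc a (by simp [hl])
    · obtain ⟨d, rfl⟩ := exists_appendPart_eq (n := n + 1) one_pos hl
      exact .inl ⟨d, ((appendPart_mem_compsLe2 one_pos).1 hc).1, rfl⟩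
    · obtain ⟨d, rfl⟩ := exists_appendPart_eq two_pos hl
      exact .inr ⟨d, ((appendPart_mem_compsLe2 two_pos).1 hc).1, rfl⟩
  · rintro (⟨d, hd, rfl⟩ | ⟨d, hd, rfl⟩)
    · exact (appendPart_mem_compsLe2 one_pos).2 ⟨hd, .inl rfl⟩
    · exact (appendPart_mem_compsLe2 two_pos).2 ⟨hd, .inr rfl⟩

lemma disjoint_map_appendPart_one_two (s : Finset (Composition (n + 1)))
    (t : Finset (Composition n)) :
    Disjoint (s.map (appendPart (n + 1) 1 one_pos)) (t.map (appendPart n 2 two_pos)) := by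
  simp only [disjoint_left, mem_map]
  rintro _ ⟨c, -, rfl⟩ ⟨d, -, h⟩
  simpa [blocks_appendPart] using congrArg (List.getLast? ·.blocks) h

lemma sum_compsLe2_add_two {M : Type*} [AddCommMonoid M] (F : Composition (n + 2) → M) :
    ∑ c ∈ compsLe2 (n + 2), F c =
      ∑ c ∈ compsLe2 (n + 1), F (appendPart (n + 1) 1 one_pos c) +
        ∑ c ∈ compsLe2 n, F (appendPart n 2 two_pos c) := by
  rw [compsLe2_add_two, sum_union (disjoint_map_appendPart_one_two _ _), sum_map, sum_map]

end CompsLe2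

section PrefixWeight

/-- The product over the entries `a` of a list of `w s a`, where `s` is the sum of the entries
preceding `a`. The product runs over positions; the default value of `getD` is never attained. -/
def prefixWeight {M : Type*} [CommMonoid M] (w : ℕ → ℕ → M) (l : List ℕ) : M :=
  ∏ i ∈ range l.length, w (l.take i).sum (l.getD i 0)

lemma prefixWeight_append_singleton {M : Type*} [CommMonoid M] (w : ℕ → ℕ → M) (l : List ℕ)
    (a : ℕ) : prefixWeight w (l ++ [a]) = prefixWeight w l * w l.sum a := by
  have init_factors : ∀ i ∈ range l.length,
      w ((l ++ [a]).take i).sum ((l ++ [a]).getD i 0) = w (l.take i).sum (l.getD i 0) := by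
    intro i hi
    have hi : i < l.length := mem_range.1 hi
    rw [List.getD_append _ _ _ _ hi, List.take_append_of_le_length hi.le]
  have last_factor : w ((l ++ [a]).take l.length).sum ((l ++ [a]).getD l.length 0) = w l.sum a := by
    simp
  rw [prefixWeight, List.length_append, List.length_singleton, prod_range_succ,
    prod_congr rfl init_factors, last_factor, prefixWeight]

lemma prefixWeight_appendPart {M : Type*} [CommMonoid M] (w : ℕ → ℕ → M) {n k : ℕ} (hk : 0 < k)
    (c : Composition n) :
    prefixWeight w (appendPart n k hk c).blocks = prefixWeight w c.blocks * w n k := by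
  rw [blocks_appendPart, prefixWeight_append_singleton, c.blocks_sum]

variable {R : Type*} [CommSemiring R] (w : ℕ → ℕ → R)

lemma sum_prefixWeight_compsLe2_zero : ∑ c ∈ compsLe2 0, prefixWeight w c.blocks = 1 := by
  simp [compsLe2_eq_singleton_of_le_one zero_le_one, prefixWeight]

lemma sum_prefixWeight_compsLe2_one : ∑ c ∈ compsLe2 1, prefixWeight w c.blocks = w 0 1 := by
  simp [compsLe2_eq_singleton_of_le_one le_rfl, prefixWeight]

lemma sum_prefixWeight_compsLe2_add_two (n : ℕ) :
    ∑ c ∈ compsLe2 (n + 2), prefixWeight w c.blocks =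
      (∑ c ∈ compsLe2 (n + 1), prefixWeight w c.blocks) * w (n + 1) 1 +
        (∑ c ∈ compsLe2 n, prefixWeight w c.blocks) * w n 2 := by
  simp only [sum_compsLe2_add_two, prefixWeight_appendPart, sum_mul]

end PrefixWeight

lemma factorial_add_two_eq_add (n : ℕ) :
    (n + 2).factorial = (n + 1).factorial + n.factorial * (1 + n) ^ 2 := by
  rw [Nat.factorial_succ (n + 1), Nat.factorial_succ n]
  ring

/-- `Σ_{(a_1,…,a_m) ∈ C_{≤2}(n)} Π_{i : a_i = 2} (1 + a_1 + ⋯ + a_{i-1})² = n!`. -/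
theorem sum_comps_prod_sq_eq_factorial (n : ℕ) (hn : 1 ≤ n) :
    ∑ c ∈ compsLe2 n, ∏ i ∈ Finset.range c.blocks.length,
        (if c.blocks.getD i 0 = 2 then (1 + (c.blocks.take i).sum) ^ 2 else 1) =
      Nat.factorial n := by
  let w (s a : ℕ) : ℕ := if a = 2 then (1 + s) ^ 2 else 1
  change ∑ c ∈ compsLe2 n, prefixWeight w c.blocks = n.factorial
  clear hn
  induction n using Nat.twoStepInduction with
  | zero => exact sum_prefixWeight_compsLe2_zero w
  | one => exact sum_prefixWeight_compsLe2_one w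
  | more n ih_n ih_succ =>
    rw [sum_prefixWeight_compsLe2_add_two, ih_n, ih_succ, factorial_add_two_eq_add]
    simp [w]
end

section
/- There exists a constant C > 0 such that for every integer n ≥ 1, the variance of the number of descents of a uniformly random involution of S_n is at most C·n; equivalently, Σ_{π ∈ S_n, π² = id} (des(π) − (n−1)/2)² ≤ C · n · i_n. -/
open Finset

/-- The involutions of the symmetric group `S_n`. -/
def involutions (n : ℕ) : Finset (Equiv.Perm (Fin n)) :=
  Finset.univ.filter fun π => π * π = 1

/-!
Let `Yᵢ(π) = ±1` record whether `π` has a descent at `i`, so that `des π - (n - 1) / 2 = S(π) / 2`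
with `S = ∑ᵢ Yᵢ`. Conjugation by the adjacent transposition `sᵢ = (i i+1)` permutes the involutions.
It flips `Yᵢ(π)` unless `π` preserves the pair `{i, i+1}`, and it leaves `Yⱼ(π)` unchanged unless
`|i - j| ≤ 1` or `π` maps `{j, j+1}` to `{i, i+1}`, hence it changes `S` by at most `8`. Averaging
`Yᵢ S` over `π` and its conjugate therefore gives at most `4`, unless `π` preserves `{i, i+1}`. The
latter happens with probability at most `2 / (n - 1)`, and then `Yᵢ S ≤ n - 1`. So `E[Yᵢ S] ≤ 6`,
and summing over `i` gives `E[S²] ≤ 6 (n - 1)`.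
-/

section Involutions

variable {n : ℕ}

lemma mem_involutions {π : Equiv.Perm (Fin n)} : π ∈ involutions n ↔ π * π = 1 := by
  simp [involutions]

lemma conj_mem_involutions_iff {g π : Equiv.Perm (Fin n)} :
    MulAut.conj g π ∈ involutions n ↔ π ∈ involutions n := by
  rw [mem_involutions, mem_involutions, ← map_mul, map_eq_one_iff _ (MulAut.conj g).injective]

lemma sum_involutions_conj {M : Type*} [AddCommMonoid M] (g : Equiv.Perm (Fin n))
    (f : Equiv.Perm (Fin n) → M) :
    ∑ π ∈ involutions n, f (MulAut.conj g π) = ∑ π ∈ involutions n, f π :=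
  sum_equiv (MulAut.conj g).toEquiv (fun _ => conj_mem_involutions_iff.symm) fun _ _ => rfl

lemma card_involutions_apply_eq_of_ne {a b c : Fin n} (hab : a ≠ b) (hac : a ≠ c) :
    #{π ∈ involutions n | π a = b} = #{π ∈ involutions n | π a = c} := by
  rw [card_filter, card_filter, ← sum_involutions_conj (Equiv.swap b c)]
  refine sum_congr rfl fun π _ => if_congr ?_ rfl rfl
  rw [MulAut.conj_apply, Equiv.swap_inv, Equiv.Perm.mul_apply, Equiv.Perm.mul_apply,
    Equiv.swap_apply_of_ne_of_ne hab hac, Equiv.swap_apply_eq_iff, Equiv.swap_apply_left]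

lemma pred_mul_card_involutions_apply_eq_le {a b : Fin n} (hab : a ≠ b) :
    (n - 1) * #{π ∈ involutions n | π a = b} ≤ #(involutions n) :=
  calc (n - 1) * #{π ∈ involutions n | π a = b}
      = ∑ _c ∈ univ.erase a, #{π ∈ involutions n | π a = b} := by simp
    _ = ∑ c ∈ univ.erase a, #{π ∈ involutions n | π a = c} :=
        sum_congr rfl fun _ hc => card_involutions_apply_eq_of_ne hab (ne_of_mem_erase hc).symm
    _ ≤ ∑ c, #{π ∈ involutions n | π a = c} := sum_le_sum_of_subset (erase_subset _ _)
    _ = #(involutions n) := (card_eq_sum_card_fiberwise fun _ _ => mem_coe.2 (mem_univ _)).symm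

lemma swap_mul_mem_involutions {a b : Fin n} {π : Equiv.Perm (Fin n)} (hπ : π ∈ involutions n)
    (ha : π a = a) (hb : π b = b) : Equiv.swap a b * π ∈ involutions n := by
  rw [mem_involutions] at hπ ⊢
  have hcomm : π * Equiv.swap a b = Equiv.swap a b * π := by
    rw [Equiv.mul_swap_eq_swap_mul, ha, hb]
  rw [mul_assoc, ← mul_assoc π, hcomm, mul_assoc, hπ, mul_one, Equiv.swap_mul_self]

lemma card_involutions_fix_fix_le (a b : Fin n) :
    #{π ∈ involutions n | π a = a ∧ π b = b} ≤ #{π ∈ involutions n | π a = b} := by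
  refine card_le_card_of_injOn (Equiv.swap a b * ·) (fun π hπ => ?_)
    (mul_right_injective _).injOn
  obtain ⟨hπ, ha, hb⟩ := mem_filter.1 hπ
  exact mem_filter.2 ⟨swap_mul_mem_involutions hπ ha hb, by simp [ha]⟩

lemma card_involutions_preserve_pair_le (a b : Fin n) :
    #{π ∈ involutions n | s(π a, π b) = s(a, b)} ≤ 2 * #{π ∈ involutions n | π a = b} :=
  calc #{π ∈ involutions n | s(π a, π b) = s(a, b)}
      ≤ #({π ∈ involutions n | π a = a ∧ π b = b} ∪ {π ∈ involutions n | π a = b}) := by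
        rw [← filter_or]
        refine card_le_card (monotone_filter_right _ fun π _ hπ => ?_)
        exact (Sym2.eq_iff.1 hπ).imp_right And.left
    _ ≤ #{π ∈ involutions n | π a = a ∧ π b = b} + #{π ∈ involutions n | π a = b} :=
        card_union_le _ _
    _ ≤ 2 * #{π ∈ involutions n | π a = b} := by
        rw [two_mul]
        exact Nat.add_le_add_right (card_involutions_fix_fix_le a b) _

lemma pred_mul_card_involutions_preserve_pair_le {a b : Fin n} (hab : a ≠ b) :
    (n - 1) * #{π ∈ involutions n | s(π a, π b) = s(a, b)} ≤ 2 * #(involutions n) :=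
  calc (n - 1) * #{π ∈ involutions n | s(π a, π b) = s(a, b)}
      ≤ (n - 1) * (2 * #{π ∈ involutions n | π a = b}) := by
        gcongr; exact card_involutions_preserve_pair_le a b
    _ = 2 * ((n - 1) * #{π ∈ involutions n | π a = b}) := mul_left_comm _ _ _
    _ ≤ 2 * #(involutions n) := by gcongr; exact pred_mul_card_involutions_apply_eq_le hab

end Involutions

lemma swap_lt_swap_iff_of_covBy {α : Type*} [LinearOrder α] {a b x y : α} (hab : a ⋖ b)
    (hxy : s(x, y) ≠ s(a, b)) : Equiv.swap a b x < Equiv.swap a b y ↔ x < y := by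
  have lt_iff_of_ne {z : α} (hza : z ≠ a) : z < a ↔ z < b :=
    ⟨fun h => h.trans hab.lt, fun h => (not_lt.1 fun ha => hab.2 ha h).lt_of_ne hza⟩
  have gt_iff_of_ne {z : α} (hzb : z ≠ b) : a < z ↔ b < z :=
    ⟨fun h => (not_lt.1 fun hb => hab.2 h hb).lt_of_ne hzb.symm, fun h => hab.lt.trans h⟩
  grind [Sym2.eq_iff]

section DescentSign

variable {m : ℕ}

/-- The unordered pair `{i, i + 1}`: the only pair of values whose order is changed by the
transposition `(i i+1)`. -/
def adjPair (i : Fin m) : Sym2 (Fin (m + 1)) := s(i.castSucc, i.succ)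

/-- The adjacent transposition `(i i+1)`, by which permutations are conjugated to flip their
`descentSign` at `i`. -/
def adjSwap (i : Fin m) : Equiv.Perm (Fin (m + 1)) := Equiv.swap i.castSucc i.succ

/-- The centred descent indicator at position `i`: `1` if `π` has a descent at `i`, and `-1`
otherwise. Positions are indexed by `Fin m`, so the last element of `Fin (m + 1)` is not one. -/
def descentSign (i : Fin m) (π : Equiv.Perm (Fin (m + 1))) : ℝ :=
  if π i.succ < π i.castSucc then 1 else -1

lemma adjPair_injective : Function.Injective (adjPair : Fin m → Sym2 (Fin (m + 1))) := by
  intro i j hij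
  simp only [adjPair, Sym2.eq_iff, Fin.ext_iff, Fin.val_castSucc, Fin.val_succ] at hij
  omega

lemma adjSwap_lt_adjSwap_iff {i : Fin m} {x y : Fin (m + 1)} (hxy : s(x, y) ≠ adjPair i) :
    adjSwap i x < adjSwap i y ↔ x < y :=
  swap_lt_swap_iff_of_covBy (Fin.covBy_iff.2 (by simp)) hxy

lemma conj_adjSwap_apply (i : Fin m) (π : Equiv.Perm (Fin (m + 1))) (x : Fin (m + 1)) :
    MulAut.conj (adjSwap i) π x = adjSwap i (π (adjSwap i x)) := by
  simp [adjSwap]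

lemma abs_descentSign (i : Fin m) (π : Equiv.Perm (Fin (m + 1))) : |descentSign i π| = 1 := by
  unfold descentSign
  split_ifs <;> simp

lemma descentSign_conj_adjSwap_self {i : Fin m} {π : Equiv.Perm (Fin (m + 1))}
    (hπ : s(π i.castSucc, π i.succ) ≠ adjPair i) :
    descentSign i (MulAut.conj (adjSwap i) π) = -descentSign i π := by
  have hlt : MulAut.conj (adjSwap i) π i.succ < MulAut.conj (adjSwap i) π i.castSucc ↔
      π i.castSucc < π i.succ := by
    rw [conj_adjSwap_apply, conj_adjSwap_apply]
    simp only [adjSwap, Equiv.swap_apply_left, Equiv.swap_apply_right]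
    exact adjSwap_lt_adjSwap_iff hπ
  have hne : π i.castSucc ≠ π i.succ := π.injective.ne Fin.castSucc_lt_succ.ne
  rw [descentSign, descentSign, if_congr hlt rfl rfl]
  grind

lemma descentSign_conj_adjSwap_of_far {i j : Fin m} {π : Equiv.Perm (Fin (m + 1))}
    (hij : (i : ℕ) + 1 < j ∨ (j : ℕ) + 1 < i) (hπ : s(π j.castSucc, π j.succ) ≠ adjPair i) :
    descentSign j (MulAut.conj (adjSwap i) π) = descentSign j π := by
  have hcast : adjSwap i j.castSucc = j.castSucc := by
    apply Equiv.swap_apply_of_ne_of_ne <;> simp only [ne_eq, Fin.ext_iff] <;> grind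
  have hsucc : adjSwap i j.succ = j.succ := by
    apply Equiv.swap_apply_of_ne_of_ne <;> simp only [ne_eq, Fin.ext_iff] <;> grind
  refine if_congr ?_ rfl rfl
  rw [conj_adjSwap_apply, conj_adjSwap_apply, hcast, hsucc,
    adjSwap_lt_adjSwap_iff (by rwa [Sym2.eq_swap])]

lemma card_near_le_three (i : Fin m) :
    #{j : Fin m | (i : ℕ) ≤ j + 1 ∧ (j : ℕ) ≤ i + 1} ≤ 3 :=
  calc #{j : Fin m | (i : ℕ) ≤ j + 1 ∧ (j : ℕ) ≤ i + 1}
      ≤ #(Icc ((i : ℕ) - 1) (i + 1)) :=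
        card_le_card_of_injOn Fin.val
          (fun j hj => mem_coe.2 (mem_Icc.2 (by have := (mem_filter.1 hj).2; omega)))
          Fin.val_injective.injOn
    _ ≤ 3 := by rw [Nat.card_Icc]; omega

lemma card_map_adjPair_eq_le_one (p : Sym2 (Fin (m + 1))) (π : Equiv.Perm (Fin (m + 1))) :
    #{j : Fin m | s(π j.castSucc, π j.succ) = p} ≤ 1 := by
  refine card_le_one.2 fun j hj k hk => adjPair_injective (Sym2.map.injective π.injective ?_)
  exact (mem_filter.1 hj).2.trans (mem_filter.1 hk).2.symm

lemma card_descentSign_conj_adjSwap_ne_le (i : Fin m) (π : Equiv.Perm (Fin (m + 1))) :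
    #{j | descentSign j (MulAut.conj (adjSwap i) π) ≠ descentSign j π} ≤ 4 :=
  calc #{j | descentSign j (MulAut.conj (adjSwap i) π) ≠ descentSign j π}
      ≤ #{j : Fin m | ((i : ℕ) ≤ j + 1 ∧ (j : ℕ) ≤ i + 1) ∨
          s(π j.castSucc, π j.succ) = adjPair i} := by
        refine card_le_card (monotone_filter_right _ fun j _ hj => ?_)
        contrapose! hj
        exact descentSign_conj_adjSwap_of_far (by have := hj.1; omega) hj.2
    _ ≤ 3 + 1 := by
        rw [filter_or]
        exact (card_union_le _ _).trans
          (add_le_add (card_near_le_three i) (card_map_adjPair_eq_le_one (adjPair i) π))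

lemma abs_sum_descentSign_sub_conj_adjSwap_le (i : Fin m) (π : Equiv.Perm (Fin (m + 1))) :
    |∑ j, descentSign j π - ∑ j, descentSign j (MulAut.conj (adjSwap i) π)| ≤ 8 := by
  set σ := MulAut.conj (adjSwap i) π
  have hterm (j : Fin m) :
      |descentSign j π - descentSign j σ| ≤ if descentSign j σ ≠ descentSign j π then 2 else 0 := by
    split_ifs with hj
    · have := abs_sub (descentSign j π) (descentSign j σ)
      rw [abs_descentSign, abs_descentSign] at this
      linarith
    · simp [not_ne_iff.1 hj]
  have hcard : (#{j | descentSign j σ ≠ descentSign j π} : ℝ) ≤ 4 := by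
    exact_mod_cast card_descentSign_conj_adjSwap_ne_le i π
  calc |∑ j, descentSign j π - ∑ j, descentSign j σ|
      ≤ ∑ j, |descentSign j π - descentSign j σ| := by
        rw [← sum_sub_distrib]; exact abs_sum_le_sum_abs _ _
    _ ≤ ∑ j, if descentSign j σ ≠ descentSign j π then 2 else 0 := sum_le_sum fun j _ => hterm j
    _ = #{j | descentSign j σ ≠ descentSign j π} * 2 := by
        rw [← sum_filter, sum_const, nsmul_eq_mul]
    _ ≤ 8 := by linarith

lemma descentSign_mul_sum_le (i : Fin m) (π : Equiv.Perm (Fin (m + 1))) :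
    descentSign i π * ∑ j, descentSign j π ≤ m :=
  calc descentSign i π * ∑ j, descentSign j π
      ≤ |∑ j, descentSign j π| := by
        rw [← one_mul |∑ j, _|, ← abs_descentSign i π, ← abs_mul]; exact le_abs_self _
    _ ≤ ∑ j, |descentSign j π| := abs_sum_le_sum_abs _ _
    _ = m := by simp [abs_descentSign]

lemma descentSign_mul_sum_add_conj_adjSwap_le (i : Fin m) (π : Equiv.Perm (Fin (m + 1))) :
    descentSign i π * ∑ j, descentSign j π +
      descentSign i (MulAut.conj (adjSwap i) π) *
        ∑ j, descentSign j (MulAut.conj (adjSwap i) π) ≤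
      8 + 2 * m * if s(π i.castSucc, π i.succ) = adjPair i then 1 else 0 := by
  split_ifs with hπ
  · linarith [descentSign_mul_sum_le i π, descentSign_mul_sum_le i (MulAut.conj (adjSwap i) π)]
  · rw [descentSign_conj_adjSwap_self hπ, neg_mul, ← sub_eq_add_neg, ← mul_sub, mul_zero, add_zero]
    refine (le_abs_self _).trans ?_
    rw [abs_mul, abs_descentSign, one_mul]
    exact abs_sum_descentSign_sub_conj_adjSwap_le i π

lemma sum_involutions_descentSign_mul_sum_le (i : Fin m) :
    ∑ π ∈ involutions (m + 1), descentSign i π * ∑ j, descentSign j π ≤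
      6 * #(involutions (m + 1)) := by
  have hsum := sum_le_sum fun π (_ : π ∈ involutions (m + 1)) =>
    descentSign_mul_sum_add_conj_adjSwap_le i π
  rw [sum_add_distrib,
    sum_involutions_conj (adjSwap i) fun π => descentSign i π * ∑ j, descentSign j π,
    sum_add_distrib, sum_const, nsmul_eq_mul, ← mul_sum, sum_boole] at hsum
  have hcard : (m : ℝ) * #{π ∈ involutions (m + 1) | s(π i.castSucc, π i.succ) = adjPair i} ≤
      2 * #(involutions (m + 1)) := by
    exact_mod_cast pred_mul_card_involutions_preserve_pair_le (Fin.castSucc_lt_succ (i := i)).ne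
  linarith

lemma sum_involutions_sq_sum_descentSign_le (m : ℕ) :
    ∑ π ∈ involutions (m + 1), (∑ i, descentSign i π) ^ 2 ≤ 6 * m * #(involutions (m + 1)) :=
  calc ∑ π ∈ involutions (m + 1), (∑ i, descentSign i π) ^ 2
      = ∑ i, ∑ π ∈ involutions (m + 1), descentSign i π * ∑ j, descentSign j π := by
        rw [sum_comm]
        exact sum_congr rfl fun π _ => by rw [sq, sum_mul]
    _ ≤ ∑ _i : Fin m, 6 * (#(involutions (m + 1)) : ℝ) :=
        sum_le_sum fun i _ => sum_involutions_descentSign_mul_sum_le i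
    _ = 6 * m * #(involutions (m + 1)) := by
        rw [sum_const, card_univ, Fintype.card_fin, nsmul_eq_mul]; ring

lemma descents_eq_card (π : Equiv.Perm (Fin (m + 1))) :
    descents π = #{i : Fin m | π i.succ < π i.castSucc} := by
  rw [descents, card_filter, Fin.sum_univ_castSucc, card_filter]
  simp [Fin.succ]

lemma descents_sub_eq_sum_descentSign_div_two (π : Equiv.Perm (Fin (m + 1))) :
    (descents π : ℝ) - m / 2 = (∑ i, descentSign i π) / 2 := by
  have hsign (i : Fin m) :
      descentSign i π = 2 * (if π i.succ < π i.castSucc then 1 else 0) - 1 := by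
    unfold descentSign; split_ifs <;> norm_num
  rw [sum_congr rfl fun i _ => hsign i, sum_sub_distrib, ← mul_sum, sum_boole,
    ← descents_eq_card, sum_const, card_univ, Fintype.card_fin, nsmul_one]
  ring

end DescentSign

/-- The variance of the number of descents of a random involution of `S_n` is `O(n)`. -/
theorem var_descents_involutions_le :
    ∃ C : ℝ, 0 < C ∧ ∀ n : ℕ, 1 ≤ n →
      ∑ π ∈ involutions n, ((descents π : ℝ) - ((n : ℝ) - 1) / 2) ^ 2 ≤
        C * n * (involutions n).card := by
  refine ⟨3 / 2, by norm_num, fun n hn => ?_⟩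
  obtain ⟨m, rfl⟩ := Nat.exists_eq_add_of_le' hn
  push_cast
  calc ∑ π ∈ involutions (m + 1), ((descents π : ℝ) - ((m : ℝ) + 1 - 1) / 2) ^ 2
      = (∑ π ∈ involutions (m + 1), (∑ i, descentSign i π) ^ 2) / 4 := by
        rw [sum_div]
        refine sum_congr rfl fun π _ => ?_
        rw [add_sub_cancel_right, descents_sub_eq_sum_descentSign_div_two, div_pow]
        norm_num
    _ ≤ 6 * m * #(involutions (m + 1)) / 4 := by
        gcongr; exact sum_involutions_sq_sum_descentSign_le m
    _ ≤ 3 / 2 * (m + 1) * #(involutions (m + 1)) := by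
        nlinarith [Nat.cast_nonneg (α := ℝ) #(involutions (m + 1))]
end
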